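/- arXiv:1404.5489 — 3 statements merged into one kernel-verified Lean document; each statement's English description precedes it below -/
import Mathlib

section
/- Let B be a finite set of monomials in R[x]. The linear span ⟨B⟩ is connected to 1 if and only if 1 ∈ B and every monomial m ∈ B with m ≠ 1 can be written m = x_{i₀}·m' for some index i₀ ∈ {1,…,n} and some monomial m' ∈ B. -/
open MvPolynomial

noncomputable section

/-- `R[x] = ℝ[x₁,…,xₙ]`. -/
abbrev PolyR (n : ℕ) := MvPolynomial (Fin n) ℝ

/-- `span(E·E)`, the linear span of products of pairs of elements of `E`. -/
def spanEE {n : ℕ} (E : Submodule ℝ (PolyR n)) : Submodule ℝ (PolyR n) :=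
  Submodule.span ℝ (Set.image2 (· * ·) (E : Set (PolyR n)) (E : Set (PolyR n)))

lemma mul_mem_spanEE {n : ℕ} {E : Submodule ℝ (PolyR n)} :
    ∀ p q : PolyR n, p ∈ E → q ∈ E → p * q ∈ spanEE E :=
  fun _ _ hp hq => Submodule.subset_span (Set.mem_image2_of_mem hp hq)

lemma spanEE_mono {n : ℕ} {E E' : Submodule ℝ (PolyR n)} (h : E ≤ E') :
    spanEE E ≤ spanEE E' :=
  Submodule.span_mono (Set.image2_subset h h)

/-- Finite sums of squares of elements of `E`. -/
def SoS {n : ℕ} (E : Submodule ℝ (PolyR n)) : Set (PolyR n) :=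
  (AddSubmonoid.closure ((fun q => q ^ 2) '' (E : Set (PolyR n))) : Set (PolyR n))

/-- The truncated quadratic module `Q_{E,G}` for the constraints `G = (G0, G1)`. -/
def QMod {n : ℕ} (E : Submodule ℝ (PolyR n)) (G0 G1 : Set (PolyR n)) : Set (PolyR n) :=
  { p | ∃ (s0 s1 : Finset (PolyR n)) (h h' : PolyR n → PolyR n),
      ↑s0 ⊆ G0 ∧ ↑s1 ⊆ G1 ∧
      (∀ g ∈ s0, h g ∈ E ∧ g * h g ∈ spanEE E) ∧
      (∀ g ∈ s1, h' g ∈ SoS E ∧ g * h' g ∈ spanEE E) ∧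
      p = (∑ g ∈ s0, g * h g) + ∑ g ∈ s1, g * h' g }

/-- The dual convex set `L_{E,G}` of linear forms on `span(E·E)`. -/
def LSet {n : ℕ} (E : Submodule ℝ (PolyR n)) (G0 G1 : Set (PolyR n)) :
    Set (↥(spanEE E) →ₗ[ℝ] ℝ) :=
  { Λ | (∀ q : ↥(spanEE E), (q : PolyR n) ∈ QMod E G0 G1 → 0 ≤ Λ q) ∧
        ∀ q : ↥(spanEE E), (q : PolyR n) = 1 → Λ q = 1 }

/-- `f^μ_{E,G}`, as an extended real (so that it is `+∞` when `L_{E,G} = ∅`). -/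
def fmu {n : ℕ} (E : Submodule ℝ (PolyR n)) (G0 G1 : Set (PolyR n))
    (f : ↥(spanEE E)) : EReal :=
  sInf ((fun Λ : ↥(spanEE E) →ₗ[ℝ] ℝ => ((Λ f : ℝ) : EReal)) '' LSet E G0 G1)

/-- `f^sos_{E,G}`, as an extended real (so that it is `-∞` when the set is empty). -/
def fsos {n : ℕ} (E : Submodule ℝ (PolyR n)) (G0 G1 : Set (PolyR n)) (f : PolyR n) : EReal :=
  sSup ((fun γ : ℝ => (γ : EReal)) '' { γ : ℝ | f - C γ ∈ QMod E G0 G1 })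

/-- The basic semialgebraic set `S(G)`. -/
def SemiSet {n : ℕ} (G0 G1 : Set (PolyR n)) : Set (Fin n → ℝ) :=
  { x | (∀ g ∈ G0, eval x g = 0) ∧ ∀ g ∈ G1, 0 ≤ eval x g }

/-- The truncated Hankel operator `H_Λ^E : E → E*`, `H_Λ^E(p)(q) = Λ(pq)`, for a linear
form `Λ` defined on a space `W` containing all products of pairs of elements of `E`. -/
def Hankel {n : ℕ} (W E : Submodule ℝ (PolyR n)) (Λ : ↥W →ₗ[ℝ] ℝ)
    (h : ∀ p q : PolyR n, p ∈ E → q ∈ E → p * q ∈ W) :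
    ↥E →ₗ[ℝ] Module.Dual ℝ ↥E :=
  LinearMap.mk₂ ℝ (fun p q : ↥E => Λ ⟨(p : PolyR n) * q, h _ _ p.2 q.2⟩)
    (fun p p' q => by
      rw [← map_add]; exact congrArg Λ (Subtype.ext (by simp [add_mul])))
    (fun c p q => by
      rw [← map_smul]; exact congrArg Λ (Subtype.ext (by simp [smul_mul_assoc])))
    (fun p q q' => by
      rw [← map_add]; exact congrArg Λ (Subtype.ext (by simp [mul_add])))
    (fun c p q => by
      rw [← map_smul]; exact congrArg Λ (Subtype.ext (by simp [mul_smul_comm])))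

/-- The kernel of the truncated Hankel operator, as a subspace of `R[x]`. -/
def HKer {n : ℕ} (W E : Submodule ℝ (PolyR n)) (Λ : ↥W →ₗ[ℝ] ℝ)
    (h : ∀ p q : PolyR n, p ∈ E → q ∈ E → p * q ∈ W) : Submodule ℝ (PolyR n) :=
  (LinearMap.ker (Hankel W E Λ h)).map E.subtype

/-- The rank of the truncated Hankel operator. -/
def HRank {n : ℕ} (W E : Submodule ℝ (PolyR n)) (Λ : ↥W →ₗ[ℝ] ℝ)
    (h : ∀ p q : PolyR n, p ∈ E → q ∈ E → p * q ∈ W) : Cardinal :=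
  Module.rank ℝ ↥(LinearMap.range (Hankel W E Λ h))

/-- The full Hankel operator `H_Λ : R[x] → R[x]*` of a linear form on `R[x]`. -/
def FullHankel {n : ℕ} (Λ : PolyR n →ₗ[ℝ] ℝ) :
    PolyR n →ₗ[ℝ] Module.Dual ℝ (PolyR n) :=
  LinearMap.compr₂ (LinearMap.mul ℝ (PolyR n)) Λ

/-- The prolongation `E⁺ = E + x₁E + … + xₙE`. -/
def prolong {n : ℕ} (E : Submodule ℝ (PolyR n)) : Submodule ℝ (PolyR n) :=
  E ⊔ ⨆ i : Fin n, Submodule.map (LinearMap.mulLeft ℝ (X i : PolyR n)) E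

/-- A subspace `E` is connected to 1. -/
def ConnectedTo1 {n : ℕ} (E : Submodule ℝ (PolyR n)) : Prop :=
  (1 : PolyR n) ∈ E ∧ ∃ (k : ℕ) (c : ℕ → Submodule ℝ (PolyR n)),
    c 0 = Submodule.span ℝ {1} ∧ c k = E ∧
    ∀ i < k, c i ≤ c (i + 1) ∧ c (i + 1) ≤ prolong (c i)

/-- Degree `|α|` of an exponent vector. -/
def degOf {n : ℕ} (α : Fin n →₀ ℕ) : ℕ := α.sum fun _ e => e

/-- `B⁺ = B ∪ x₁B ∪ … ∪ xₙB` for a set of monomials (exponent vectors). -/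
def Bplus {n : ℕ} (B : Set (Fin n →₀ ℕ)) : Set (Fin n →₀ ℕ) :=
  B ∪ ⋃ i : Fin n, (fun α => α + Finsupp.single i 1) '' B

/-- The border `∂B = B⁺ \ B`. -/
def BBorder {n : ℕ} (B : Set (Fin n →₀ ℕ)) : Set (Fin n →₀ ℕ) :=
  Bplus B \ B

/-- A set of monomials connected to 1. -/
def MonConnectedTo1 {n : ℕ} (B : Set (Fin n →₀ ℕ)) : Prop :=
  0 ∈ B ∧ ∀ α ∈ B, α ≠ 0 → ∃ i : Fin n, ∃ β ∈ B, α = β + Finsupp.single i 1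

/-- `⟨B⟩_t`: the span of the monomials of `B` of degree at most `t`. -/
def spanB {n : ℕ} (B : Set (Fin n →₀ ℕ)) (t : ℕ) : Submodule ℝ (PolyR n) :=
  Submodule.span ℝ ((fun α => (monomial α (1 : ℝ) : PolyR n)) '' { α ∈ B | degOf α ≤ t })

/-- `⟨F|t⟩`: the span of `{ x^α f : f ∈ F, deg f ≤ t, |α| ≤ t − deg f }`. -/
def FSpan {n : ℕ} (F : Finset (PolyR n)) (t : ℕ) : Submodule ℝ (PolyR n) :=
  Submodule.span ℝ { p : PolyR n | ∃ f ∈ F, ∃ α : Fin n →₀ ℕ,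
    f.totalDegree ≤ t ∧ degOf α + f.totalDegree ≤ t ∧ p = monomial α (1 : ℝ) * f }

/-- `F` is a border basis for `B` in degree `t`. -/
def IsBorderBasis {n : ℕ} (B : Set (Fin n →₀ ℕ)) (F : Finset (PolyR n)) (t : ℕ) : Prop :=
  (∀ f ∈ F, f.totalDegree ≤ t →
      ((↑f.support : Set (Fin n →₀ ℕ)) ⊆ Bplus B ∧
       (∃! α, α ∈ f.support ∧ α ∈ BBorder B) ∧
       ∀ α ∈ f.support, α ∈ BBorder B → coeff α f = 1)) ∧
  (∀ f ∈ F, f.totalDegree ≤ t → ∀ f' ∈ F, f'.totalDegree ≤ t →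
      ∀ α, (α ∈ f.support ∧ α ∈ BBorder B) → (α ∈ f'.support ∧ α ∈ BBorder B) → f = f') ∧
  (∀ α ∈ BBorder B, degOf α ≤ t → ∃ f ∈ F, f.totalDegree ≤ t ∧ α ∈ f.support) ∧
  Disjoint (spanB B t) (FSpan F t) ∧
  spanB B t ⊔ FSpan F t = restrictTotalDegree (Fin n) ℝ t

/-- `F` is a graded border basis for `B` in degree `t`. -/
def IsGradedBorderBasis {n : ℕ} (B : Set (Fin n →₀ ℕ)) (F : Finset (PolyR n)) (t : ℕ) : Prop :=
  IsBorderBasis B F t ∧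
  ∀ f ∈ F, ∀ α ∈ f.support, α ∈ BBorder B → degOf α = f.totalDegree

lemma mul_mem_rtd {n t : ℕ} :
    ∀ p q : PolyR n, p ∈ restrictTotalDegree (Fin n) ℝ t →
      q ∈ restrictTotalDegree (Fin n) ℝ t →
      p * q ∈ restrictTotalDegree (Fin n) ℝ (2 * t) := by
  intro p q hp hq
  rw [mem_restrictTotalDegree] at hp hq ⊢
  calc (p * q).totalDegree ≤ p.totalDegree + q.totalDegree := totalDegree_mul p q
    _ ≤ t + t := add_le_add hp hq
    _ = 2 * t := (two_mul t).symm

lemma spanB_le {n : ℕ} (B : Set (Fin n →₀ ℕ)) (t : ℕ) :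
    spanB B t ≤ restrictTotalDegree (Fin n) ℝ t := by
  rw [spanB, Submodule.span_le]
  rintro p ⟨α, hα, rfl⟩
  rw [SetLike.mem_coe, mem_restrictTotalDegree]
  exact le_of_eq_of_le (totalDegree_monomial α one_ne_zero) hα.2

/-- The vanishing ideal of a finite family of points. -/
def vanishingIdeal {n r : ℕ} (ξ : Fin r → (Fin n → ℝ)) : Ideal (PolyR n) where
  carrier := { p : PolyR n | ∀ i, eval (ξ i) p = 0 }
  add_mem' := by
    intro a b ha hb i
    simp [ha i, hb i]
  zero_mem' := by intro i; simp
  smul_mem' := by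
    intro c p hp i
    simp [smul_eq_mul, hp i]


lemma prolong_le_iff {n : ℕ} {E F : Submodule ℝ (PolyR n)} :
    prolong E ≤ F ↔ E ≤ F ∧ ∀ i : Fin n, ∀ p ∈ E, X i * p ∈ F := by
  simp only [prolong, sup_le_iff, iSup_le_iff, Submodule.map_le_iff_le_comap]
  rfl

lemma le_prolong {n : ℕ} (E : Submodule ℝ (PolyR n)) : E ≤ prolong E :=
  (prolong_le_iff.1 le_rfl).1

lemma X_mul_mem_prolong {n : ℕ} {E : Submodule ℝ (PolyR n)} (i : Fin n) {p : PolyR n}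
    (hp : p ∈ E) : X i * p ∈ prolong E :=
  (prolong_le_iff.1 le_rfl).2 i p hp

lemma span_le_restrictSupport {n : ℕ} {B : Finset (PolyR n)}
    (hB : ∀ m ∈ B, ∃ α : Fin n →₀ ℕ, m = monomial α 1) :
    Submodule.span ℝ (B : Set (PolyR n)) ≤
      restrictSupport ℝ { α | (monomial α 1 : PolyR n) ∈ B } := by
  rw [Submodule.span_le]
  intro m hm
  obtain ⟨α, rfl⟩ := hB m hm
  exact (monomial_mem_restrictSupport ℝ).2 (Or.inl hm)

/-- Every member of a chain starting at `span {1}` and ending at `E` only involves the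
constant monomial and products of a variable with a monomial occurring in `E`. -/
lemma ConnectedTo1.le_restrictSupport {n : ℕ} {E : Submodule ℝ (PolyR n)}
    (hE : ConnectedTo1 E) {A : Set (Fin n →₀ ℕ)} (hA : E ≤ restrictSupport ℝ A) :
    E ≤ restrictSupport ℝ
      { α | α = 0 ∨ ∃ i : Fin n, ∃ β ∈ A, α = Finsupp.single i 1 + β } := by
  obtain ⟨-, k, c, hc0, hck, hc⟩ := hE
  have hcE : ∀ i ≤ k, c i ≤ E := by
    intro i hi
    induction hi using Nat.decreasingInduction with
    | self => exact hck.le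
    | of_succ j hj ih => exact (hc j hj).1.trans ih
  suffices h : ∀ i ≤ k, c i ≤ restrictSupport ℝ
      { α | α = 0 ∨ ∃ i : Fin n, ∃ β ∈ A, α = Finsupp.single i 1 + β } from
    hck ▸ h k le_rfl
  intro i
  induction i with
  | zero =>
    intro _
    rw [hc0, Submodule.span_singleton_le_iff_mem]
    exact (monomial_mem_restrictSupport ℝ).2 (Or.inl (Or.inl rfl))
  | succ i ih =>
    intro hi
    refine (hc i hi).2.trans (prolong_le_iff.2 ⟨ih (by omega), fun j p hp => ?_⟩)
    have hpA := (mem_restrictSupport_iff ℝ).1 (hA (hcE i (by omega) hp))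
    rw [mem_restrictSupport_iff, support_X_mul]
    intro α hα
    obtain ⟨β, hβ, rfl⟩ := Finset.mem_map.1 hα
    exact Or.inr ⟨j, β, hpA hβ, rfl⟩

lemma connectedTo1_span {n : ℕ} {B : Finset (PolyR n)}
    (hB : ∀ m ∈ B, ∃ α : Fin n →₀ ℕ, m = monomial α 1) (h1 : (1 : PolyR n) ∈ B)
    (h : ∀ m ∈ B, m ≠ 1 → ∃ i : Fin n, ∃ m' ∈ B, m = X i * m') :
    ConnectedTo1 (Submodule.span ℝ (B : Set (PolyR n))) := by
  refine ⟨Submodule.subset_span h1, B.sup totalDegree,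
    fun t => Submodule.span ℝ { m | m ∈ B ∧ m.totalDegree ≤ t }, ?_, ?_,
    fun t _ => ⟨Submodule.span_mono fun m hm => ⟨hm.1, hm.2.trans t.le_succ⟩, ?_⟩⟩
  · refine congrArg (Submodule.span ℝ) (Set.ext fun m => ?_)
    refine ⟨fun ⟨hm, hdeg⟩ => ?_, ?_⟩
    · obtain ⟨α, rfl⟩ := hB m hm
      rw [totalDegree_monomial α one_ne_zero, Nat.le_zero] at hdeg
      rw [(Finsupp.degree_eq_zero_iff α).1 hdeg]
      rfl
    · rintro rfl
      exact ⟨h1, totalDegree_one.le⟩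
  · refine congrArg (Submodule.span ℝ) (Set.ext fun m => ?_)
    exact ⟨And.left, fun hm => ⟨hm, Finset.le_sup hm⟩⟩
  · rw [Submodule.span_le]
    rintro m ⟨hm, hdeg⟩
    by_cases hm1 : m = 1
    · exact le_prolong _ (Submodule.subset_span ⟨hm, by simp [hm1]⟩)
    obtain ⟨i, m', hm', rfl⟩ := h m hm hm1
    have hm'0 : m' ≠ 0 := by
      obtain ⟨β, rfl⟩ := hB m' hm'
      simp
    rw [totalDegree_mul_of_isDomain (X_ne_zero i) hm'0, totalDegree_X] at hdeg
    exact X_mul_mem_prolong i (Submodule.subset_span ⟨hm', by omega⟩)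

theorem statement_5 {n : ℕ} (B : Finset (PolyR n))
    (hB : ∀ m ∈ B, ∃ α : Fin n →₀ ℕ, m = monomial α 1) :
    ConnectedTo1 (Submodule.span ℝ (B : Set (PolyR n))) ↔
      ((1 : PolyR n) ∈ B ∧
        ∀ m ∈ B, m ≠ 1 → ∃ i : Fin n, ∃ m' ∈ B, m = X i * m') := by
  refine ⟨fun hE => ?_, fun ⟨h1, h⟩ => connectedTo1_span hB h1 h⟩
  have hA := span_le_restrictSupport hB
  refine ⟨?_, fun m hm hm1 => ?_⟩
  · exact ((monomial_mem_restrictSupport ℝ).1 (hA hE.1)).resolve_right one_ne_zero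
  · obtain ⟨α, rfl⟩ := hB m hm
    have hα := hE.le_restrictSupport hA (Submodule.subset_span hm)
    obtain rfl | ⟨i, β, hβ, rfl⟩ :=
      ((monomial_mem_restrictSupport ℝ).1 hα).resolve_right one_ne_zero
    · exact absurd rfl hm1
    · exact ⟨i, monomial β 1, hβ, by simp [X, monomial_mul]⟩

end
end

section
/- Let B be a set of monomials of R[x] connected to 1 and let F be a graded border basis for B in degree t. Then for every monomial m of degree ≤ t, the projection π_{B,F}(m) of m onto ⟨B⟩_t along ⟨F|t⟩ satisfies deg(π_{B,F}(m)) ≤ deg(m). -/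
open MvPolynomial

noncomputable section

lemma degOf_add_single {n : ℕ} (α : Fin n →₀ ℕ) (i : Fin n) :
    degOf (α + Finsupp.single i 1) = degOf α + 1 := by
  unfold degOf
  rw [Finsupp.sum_add_index' (fun _ => rfl) (fun _ _ _ => rfl), Finsupp.sum_single_index rfl]

lemma exists_eq_add_single {n : ℕ} {α : Fin n →₀ ℕ} (hα : α ≠ 0) :
    ∃ (i : Fin n) (β : Fin n →₀ ℕ), α = β + Finsupp.single i 1 := by
  obtain ⟨i, hi⟩ := Finsupp.ne_iff.1 hα
  exact ⟨i, α - Finsupp.single i 1, (tsub_add_cancel_of_le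
    (Finsupp.single_le_iff.2 (Nat.one_le_iff_ne_zero.2 hi))).symm⟩

lemma X_mul_monomial_one {n : ℕ} (i : Fin n) (α : Fin n →₀ ℕ) :
    (X i * monomial α 1 : PolyR n) = monomial (α + Finsupp.single i 1) 1 := by
  rw [X, monomial_mul, one_mul, add_comm]

lemma spanB_mono {n : ℕ} (B : Set (Fin n →₀ ℕ)) {s t : ℕ} (h : s ≤ t) :
    spanB B s ≤ spanB B t :=
  Submodule.span_mono (Set.image_mono fun _ hα => ⟨hα.1, hα.2.trans h⟩)

lemma FSpan_mono {n : ℕ} (F : Finset (PolyR n)) {s t : ℕ} (h : s ≤ t) :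
    FSpan F s ≤ FSpan F t :=
  Submodule.span_mono fun _ ⟨f, hf, α, h₁, h₂, hp⟩ => ⟨f, hf, α, h₁.trans h, h₂.trans h, hp⟩

lemma monomial_mem_spanB {n : ℕ} {B : Set (Fin n →₀ ℕ)} {α : Fin n →₀ ℕ} {t : ℕ}
    (hα : α ∈ B) (ht : degOf α ≤ t) : (monomial α (1 : ℝ) : PolyR n) ∈ spanB B t :=
  Submodule.subset_span ⟨α, ⟨hα, ht⟩, rfl⟩

lemma X_mul_mem_FSpan {n : ℕ} {F : Finset (PolyR n)} {d : ℕ} {p : PolyR n}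
    (hp : p ∈ FSpan F d) (i : Fin n) : X i * p ∈ FSpan F (d + 1) := by
  have h : FSpan F d ≤ (FSpan F (d + 1)).comap (LinearMap.mulLeft ℝ (X i : PolyR n)) := by
    refine Submodule.span_le.2 ?_
    rintro _ ⟨f, hf, α, h₁, h₂, rfl⟩
    refine Submodule.subset_span ⟨f, hf, α + Finsupp.single i 1, by omega, ?_, ?_⟩
    · rw [degOf_add_single]; omega
    · rw [LinearMap.mulLeft_apply, ← mul_assoc, X_mul_monomial_one]
  exact h hp

/-- The tail of a polynomial whose only border monomial is `γ` lies in `⟨B⟩_d`. -/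
lemma monomial_sub_mem_spanB {n : ℕ} {B : Set (Fin n →₀ ℕ)} {f : PolyR n} {γ : Fin n →₀ ℕ}
    {d : ℕ} (hsupp : (↑f.support : Set (Fin n →₀ ℕ)) ⊆ Bplus B)
    (huniq : ∀ α ∈ f.support, α ∈ BBorder B → α = γ) (hcoeff : coeff γ f = 1)
    (hd : f.totalDegree ≤ d) : monomial γ (1 : ℝ) - f ∈ spanB B d := by
  classical
  have hγ : γ ∈ f.support := by simp [mem_support_iff, hcoeff]
  have hf : f = monomial γ 1 + ∑ α ∈ f.support.erase γ, monomial α (coeff α f) := by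
    conv_lhs => rw [f.as_sum, ← Finset.add_sum_erase _ _ hγ, hcoeff]
  have htail : monomial γ (1 : ℝ) - f = -∑ α ∈ f.support.erase γ, monomial α (coeff α f) := by
    nth_rewrite 1 [hf]
    ring
  rw [htail]
  refine neg_mem (Submodule.sum_mem _ fun α hα => ?_)
  obtain ⟨hne, hα⟩ := Finset.mem_erase.1 hα
  have hαB : α ∈ B := by
    by_contra hαB
    exact hne (huniq α hα ⟨hsupp hα, hαB⟩)
  have hsmul : monomial α (coeff α f) = coeff α f • (monomial α (1 : ℝ) : PolyR n) := by
    rw [smul_monomial, smul_eq_mul, mul_one]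
  rw [hsmul]
  exact Submodule.smul_mem _ _ (monomial_mem_spanB hαB ((le_totalDegree hα).trans hd))

lemma monomial_mem_sup_of_mem_Bplus {n t d : ℕ} {B : Set (Fin n →₀ ℕ)} {F : Finset (PolyR n)}
    (hF : IsGradedBorderBasis B F t) (hdt : d ≤ t) {α : Fin n →₀ ℕ} (hα : α ∈ Bplus B)
    (hd : degOf α ≤ d) : (monomial α (1 : ℝ) : PolyR n) ∈ spanB B d ⊔ FSpan F d := by
  by_cases hαB : α ∈ B
  · exact Submodule.mem_sup_left (monomial_mem_spanB hαB hd)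
  obtain ⟨⟨hshape, -, hcover, -⟩, hgraded⟩ := hF
  obtain ⟨f, hf, hft, hαf⟩ := hcover α ⟨hα, hαB⟩ (hd.trans hdt)
  obtain ⟨hsupp, huniq, hcoeff⟩ := hshape f hf hft
  have hfd : f.totalDegree ≤ d := (hgraded f hf α hαf ⟨hα, hαB⟩).symm.trans_le hd
  rw [← sub_add_cancel (monomial α (1 : ℝ)) f]
  refine Submodule.add_mem_sup
    (monomial_sub_mem_spanB hsupp (fun β hβ hβB => huniq.unique ⟨hβ, hβB⟩ ⟨hαf, hα, hαB⟩)
      (hcoeff α hαf ⟨hα, hαB⟩) hfd)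
    (Submodule.subset_span ⟨f, hf, 0, hfd, ?_, ?_⟩)
  · simpa [degOf] using hfd
  · simp

lemma X_mul_mem_sup {n t d : ℕ} {B : Set (Fin n →₀ ℕ)} {F : Finset (PolyR n)}
    (hF : IsGradedBorderBasis B F t) (hdt : d + 1 ≤ t) {p : PolyR n}
    (hp : p ∈ spanB B d ⊔ FSpan F d) (i : Fin n) :
    X i * p ∈ spanB B (d + 1) ⊔ FSpan F (d + 1) := by
  have h : spanB B d ⊔ FSpan F d ≤
      (spanB B (d + 1) ⊔ FSpan F (d + 1)).comap (LinearMap.mulLeft ℝ (X i : PolyR n)) := by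
    refine sup_le (Submodule.span_le.2 ?_)
      fun q hq => Submodule.mem_sup_right (X_mul_mem_FSpan hq i)
    rintro _ ⟨β, ⟨hβ, hβd⟩, rfl⟩
    rw [SetLike.mem_coe, Submodule.mem_comap, LinearMap.mulLeft_apply, X_mul_monomial_one]
    refine monomial_mem_sup_of_mem_Bplus hF hdt
      (Or.inr (Set.mem_iUnion.2 ⟨i, β, hβ, rfl⟩)) ?_
    rw [degOf_add_single]
    omega
  exact h hp

/-- For a graded border basis, every monomial of degree `d ≤ t` reduces within degree `d`. -/
lemma monomial_mem_spanB_sup_FSpan {n t : ℕ} {B : Set (Fin n →₀ ℕ)} {F : Finset (PolyR n)}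
    (h0 : 0 ∈ B) (hF : IsGradedBorderBasis B F t) {d : ℕ} (hdt : d ≤ t) {α : Fin n →₀ ℕ}
    (hα : degOf α = d) : (monomial α (1 : ℝ) : PolyR n) ∈ spanB B d ⊔ FSpan F d := by
  induction d generalizing α with
  | zero =>
    have hα0 : α = 0 := by
      by_contra hne
      obtain ⟨i, β, rfl⟩ := exists_eq_add_single hne
      rw [degOf_add_single] at hα
      omega
    subst hα0
    exact Submodule.mem_sup_left (monomial_mem_spanB h0 hα.le)
  | succ d ih =>
    have hne : α ≠ 0 := by
      rintro rfl
      simp [degOf] at hα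
    obtain ⟨i, β, rfl⟩ := exists_eq_add_single hne
    rw [degOf_add_single] at hα
    rw [← X_mul_monomial_one]
    exact X_mul_mem_sup hF hdt (ih (by omega) (by omega)) i

theorem statement_6 {n t : ℕ} (B : Set (Fin n →₀ ℕ)) (hB : MonConnectedTo1 B)
    (F : Finset (PolyR n)) (hF : IsGradedBorderBasis B F t) :
    ∀ α : Fin n →₀ ℕ, degOf α ≤ t → ∀ b ∈ spanB B t,
      (monomial α (1 : ℝ) : PolyR n) - b ∈ FSpan F t →
      b.totalDegree ≤ degOf α := by
  intro α hα b hb hbF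
  obtain ⟨c, hc, q, hq, hcq⟩ :=
    Submodule.mem_sup.1 (monomial_mem_spanB_sup_FSpan hB.1 hF hα rfl)
  have hbc : b - c ∈ FSpan F t := by
    have h := sub_mem (FSpan_mono F hα hq) hbF
    rwa [← hcq, show q - (c + q - b) = b - c by ring] at h
  have hzero : b - c = 0 :=
    Submodule.disjoint_def.1 hF.1.2.2.2.1 _ (sub_mem hb (spanB_mono B hα hc)) hbc
  rw [sub_eq_zero.1 hzero]
  exact (mem_restrictTotalDegree _ _ _).1 (spanB_le B _ hc)

end
end

section
/- Let E ⊂ R[x] be a finite-dimensional linear subspace with 1 ∈ E, V ⊆ E a subspace, and G = (G⁰, G⁺) a set of constraints with G⁰·V ⊆ span(E·E) and G⁺·V·V ⊆ span(E·E). Let Λ ∈ L_{E,G}, and suppose there are distinct points ξ₁,…,ξ_r ∈ ℝⁿ and weights ω₁,…,ω_r > 0 with Λ(p) = Σ_{i=1}^r ω_i p(ξ_i) for all p ∈ span(E·E), together with polynomials b₁,…,b_r ∈ V satisfying b_i(ξ_j) = 1 if i = j and b_i(ξ_j) = 0 otherwise. Then for every i: g(ξ_i) = 0 for all g ∈ G⁰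 and h(ξ_i) ≥ 0 for all h ∈ G⁺; that is, ξ_i ∈ S(G). -/
open MvPolynomial

noncomputable section

/-- A product of an equality constraint with an element of `E` lies in `Q_{E,G}`. -/
lemma mul_mem_QMod_of_mem_eq {n : ℕ} {E : Submodule ℝ (PolyR n)} {G0 G1 : Set (PolyR n)}
    {g p : PolyR n} (hg : g ∈ G0) (hp : p ∈ E) (hgp : g * p ∈ spanEE E) :
    g * p ∈ QMod E G0 G1 :=
  ⟨{g}, ∅, fun _ => p, 0, by simpa using hg, by simp, by simp [hp, hgp], by simp, by simp⟩

/-- A product of an inequality constraint with the square of an element of `E` lies in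
`Q_{E,G}`. -/
lemma mul_sq_mem_QMod_of_mem_ineq {n : ℕ} {E : Submodule ℝ (PolyR n)} {G0 G1 : Set (PolyR n)}
    {g p : PolyR n} (hg : g ∈ G1) (hp : p ∈ E) (hgp : g * p ^ 2 ∈ spanEE E) :
    g * p ^ 2 ∈ QMod E G0 G1 := by
  have hsq : p ^ 2 ∈ SoS E := AddSubmonoid.subset_closure ⟨p, hp, rfl⟩
  exact ⟨∅, {g}, 0, fun _ => p ^ 2, by simp, by simpa using hg, by simp, by simp [hsq, hgp],
    by simp⟩

theorem statement_14 {n r : ℕ} (E V : Submodule ℝ (PolyR n))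
    (hEfin : FiniteDimensional ℝ ↥E) (h1 : (1 : PolyR n) ∈ E) (hVE : V ≤ E)
    (G0 G1 : Set (PolyR n)) (hG0 : G0.Finite) (hG1 : G1.Finite)
    (hG0V : ∀ g ∈ G0, ∀ v ∈ V, g * v ∈ spanEE E)
    (hG1V : ∀ g ∈ G1, ∀ v ∈ V, ∀ w ∈ V, g * v * w ∈ spanEE E)
    (Λ : ↥(spanEE E) →ₗ[ℝ] ℝ) (hmem : Λ ∈ LSet E G0 G1)
    (ξ : Fin r → (Fin n → ℝ)) (hinj : Function.Injective ξ)
    (ω : Fin r → ℝ) (hω : ∀ i, 0 < ω i)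
    (hrep : ∀ p : ↥(spanEE E), Λ p = ∑ i, ω i * eval (ξ i) (p : PolyR n))
    (b : Fin r → PolyR n) (hb : ∀ i, b i ∈ V)
    (hinterp : ∀ i j, eval (ξ j) (b i) = if i = j then (1 : ℝ) else 0) :
    ∀ i, ξ i ∈ SemiSet G0 G1 := by
  intro i
  have hnonneg : ∀ q ∈ spanEE E, q ∈ QMod E G0 G1 → 0 ≤ ∑ j, ω j * eval (ξ j) q :=
    fun q hq hqQ => hrep ⟨q, hq⟩ ▸ hmem.1 ⟨q, hq⟩ hqQ
  refine ⟨fun g hg => ?_, fun g hg => ?_⟩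
  · have hpos := hnonneg _ (hG0V g hg _ (hb i))
      (mul_mem_QMod_of_mem_eq hg (hVE (hb i)) (hG0V g hg _ (hb i)))
    have hnb : -b i ∈ V := V.neg_mem (hb i)
    have hneg := hnonneg _ (hG0V g hg _ hnb)
      (mul_mem_QMod_of_mem_eq hg (hVE hnb) (hG0V g hg _ hnb))
    simp only [map_mul, map_neg, hinterp, mul_neg, mul_ite, mul_one, mul_zero,
      Finset.sum_neg_distrib, Finset.sum_ite_eq, Finset.mem_univ, if_true] at hpos hneg
    have hzero : ω i * eval (ξ i) g = 0 := by linarith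
    exact (mul_eq_zero.mp hzero).resolve_left (hω i).ne'
  · have hspan : g * b i ^ 2 ∈ spanEE E := by
      simpa only [pow_two, mul_assoc] using hG1V g hg _ (hb i) _ (hb i)
    have hpos := hnonneg _ hspan (mul_sq_mem_QMod_of_mem_ineq hg (hVE (hb i)) hspan)
    simp only [map_mul, pow_two, hinterp, mul_ite, mul_one, mul_zero,
      Finset.sum_ite_eq, Finset.mem_univ, if_true] at hpos
    refine nonneg_of_mul_nonneg_right ?_ (hω i)
    simpa using hpos

end
end
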